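/- Let M be a finite-dimensional Λ-module with socseq(M) = reverse(rad(M)). Then the pair (rad(M), socseq(M)) is a minimal element of rad-soc(dim_K M): every finite-dimensional Λ-module N with dim_K N = dim_K M, rad(N) ≼ rad(M) and socseq(N) ≼ socseq(M) satisfies rad(N) = rad(M) and socseq(N) = socseq(M). -/

import Mathlib

noncomputable section

/-- The relation on the free algebra killing all products of `L+1` generators. -/
def TruncRel (K : Type*) [Field K] (r L : ℕ) :
    FreeAlgebra K (Fin r) → FreeAlgebra K (Fin r) → Prop := fun a b =>
  (∃ f : Fin (L + 1) → Fin r, a = (List.ofFn fun j => FreeAlgebra.ι K (f j)).prod) ∧ b = 0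

/-- The local truncated path algebra with `r` loops and Loewy length `L+1`:
the quotient of `K⟨X_1,…,X_r⟩` by the two-sided ideal generated by all products
of `L+1` generators. -/
def TruncAlg (K : Type*) [Field K] (r L : ℕ) : Type _ := RingQuot (TruncRel K r L)

instance (K : Type*) [Field K] (r L : ℕ) : Ring (TruncAlg K r L) :=
  inferInstanceAs (Ring (RingQuot _))

instance (K : Type*) [Field K] (r L : ℕ) : Algebra K (TruncAlg K r L) :=
  inferInstanceAs (Algebra K (RingQuot _))

/-- The images of the generators `X i` in the truncated algebra. -/
def gen (K : Type*) [Field K] (r L : ℕ) (i : Fin r) : TruncAlg K r L :=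
  RingQuot.mkAlgHom K (TruncRel K r L) (FreeAlgebra.ι K i)

/-- The two-sided ideal `J` of `Λ` generated by the images of `X_1,…,X_r`,
realized as a `K`-submodule of `Λ`. -/
def Jrad (K : Type*) [Field K] (r L : ℕ) : Submodule K (TruncAlg K r L) :=
  ⊤ * Submodule.span K (Set.range (gen K r L)) * ⊤

/-- `J^l M`, the submodule of `M` given by the action of `J^l`. -/
def jpow (K : Type*) [Field K] (r L : ℕ) (M : Type*) [AddCommGroup M] [Module K M]
    [Module (TruncAlg K r L) M] [IsScalarTower K (TruncAlg K r L) M] (l : ℕ) :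
    Submodule (TruncAlg K r L) M :=
  Submodule.span (TruncAlg K r L)
    {x : M | ∃ a ∈ (Jrad K r L ^ l : Submodule K (TruncAlg K r L)), ∃ m : M, x = a • m}

/-- The socle of a module: the supremum of all simple submodules. -/
def socle (R N : Type*) [Ring R] [AddCommGroup N] [Module R N] : Submodule R N :=
  sSup {p : Submodule R N | IsSimpleModule R ↥p}

/-- The socle series: `socSeries R M l` is `soc_{l-1} M`, so `socSeries R M 0 = soc_{-1} M = ⊥`
and `socSeries R M (l+1) = soc_l M` is the preimage in `M` of `soc (M / soc_{l-1} M)`. -/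
def socSeries (R M : Type*) [Ring R] [AddCommGroup M] [Module R M] : ℕ → Submodule R M
  | 0 => ⊥
  | l + 1 => Submodule.comap (socSeries R M l).mkQ (socle R (M ⧸ socSeries R M l))

/-- Dimension of the subquotient `q / (p ⊓ q)`; for `p ≤ q` this is `dim (q/p)`. -/
def quotDim (K M : Type*) [Field K] [AddCommGroup M] [Module K M]
    (p q : Submodule K M) : ℕ :=
  Module.finrank K (↥q ⧸ Submodule.comap q.subtype p)

/-- The radical layering `rad(M) = (dim_K J^l M / J^{l+1} M)_{l=0,…,L}`. -/
def radLayering (K : Type*) [Field K] (r L : ℕ) (M : Type*) [AddCommGroup M] [Module K M]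
    [Module (TruncAlg K r L) M] [IsScalarTower K (TruncAlg K r L) M] : Fin (L + 1) → ℕ :=
  fun l => quotDim K M ((jpow K r L M ((l : ℕ) + 1)).restrictScalars K)
    ((jpow K r L M (l : ℕ)).restrictScalars K)

/-- The socle layering `socseq(M) = (dim_K soc_l M / soc_{l-1} M)_{l=0,…,L}`. -/
def socLayering (K : Type*) [Field K] (r L : ℕ) (M : Type*) [AddCommGroup M] [Module K M]
    [Module (TruncAlg K r L) M] [IsScalarTower K (TruncAlg K r L) M] : Fin (L + 1) → ℕ :=
  fun l => quotDim K M ((socSeries (TruncAlg K r L) M (l : ℕ)).restrictScalars K)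
    ((socSeries (TruncAlg K r L) M ((l : ℕ) + 1)).restrictScalars K)

/-- The dominance order on `ℕ^{L+1}`: `a ≼ b` iff all partial sums satisfy `≤`. -/
def DomLE (L : ℕ) (a b : Fin (L + 1) → ℕ) : Prop :=
  ∀ l : Fin (L + 1), ∑ j ∈ Finset.Iic l, a j ≤ ∑ j ∈ Finset.Iic l, b j

/-- `reverse (a_0, …, a_L) = (a_L, …, a_0)`. -/
def revTuple (L : ℕ) (a : Fin (L + 1) → ℕ) : Fin (L + 1) → ℕ := fun l => a l.rev

theorem trunc_induction {K : Type*} [Field K] {r L : ℕ} {P : TruncAlg K r L → Prop}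
    (h0 : ∀ c : K, P (algebraMap K _ c)) (h1 : ∀ i, P (gen K r L i))
    (hm : ∀ a b, P a → P b → P (a * b)) (ha : ∀ a b, P a → P b → P (a + b))
    (a : TruncAlg K r L) : P a := by
  obtain ⟨x, rfl⟩ : ∃ x, (RingQuot.mkAlgHom K (TruncRel K r L)) x = a :=
    RingQuot.mkAlgHom_surjective K (TruncRel K r L) a
  induction x using FreeAlgebra.induction with
  | grade0 c =>
    have e : (RingQuot.mkAlgHom K (TruncRel K r L)) (algebraMap K _ c) =
      algebraMap K (TruncAlg K r L) c := AlgHom.commutes _ c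
    exact Eq.mpr (congrArg P e) (h0 c)
  | grade1 i => exact h1 i
  | mul a b iha ihb => rw [map_mul]; exact hm _ _ iha ihb
  | add a b iha ihb => rw [map_add]; exact ha _ _ iha ihb

abbrev Vgen (K : Type*) [Field K] (r L : ℕ) : Submodule K (TruncAlg K r L) :=
  Submodule.span K (Set.range (gen K r L))

theorem V_mul_top (K : Type*) [Field K] (r L : ℕ) :
    Vgen K r L * ⊤ ≤ ⊤ * Vgen K r L := by
  have key : ∀ a : TruncAlg K r L, ∀ v ∈ Vgen K r L, v * a ∈ ⊤ * Vgen K r L := by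
    intro a
    induction a using trunc_induction with
    | h0 c =>
      intro v hv
      rw [← Algebra.commutes]
      exact Submodule.mul_mem_mul trivial hv
    | h1 i =>
      intro v hv
      exact Submodule.mul_mem_mul trivial (Submodule.subset_span ⟨i, rfl⟩)
    | hm a b iha ihb =>
      intro v hv
      rw [← mul_assoc]
      have := iha v hv
      generalize v * a = w at this
      induction this using Submodule.mul_induction_on' with
      | mem_mul_mem m _ n hn =>
        have h2 := Submodule.mul_mem_mul (show m ∈ (⊤ : Submodule K (TruncAlg K r L)) from trivial)
          (ihb n hn)
        rw [← mul_assoc, ← mul_assoc] at h2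
        have hle : (⊤ : Submodule K (TruncAlg K r L)) * ⊤ * Vgen K r L ≤
          ⊤ * Vgen K r L := mul_le_mul_left le_top _
        exact hle h2
      | add x _ y _ hx hy => rw [add_mul]; exact add_mem hx hy
    | ha a b iha ihb =>
      intro v hv
      rw [mul_add]
      exact add_mem (iha v hv) (ihb v hv)
  rw [Submodule.mul_le]
  intro v hv a _
  exact key a v hv

theorem tt (K : Type*) [Field K] (r L : ℕ) :
    (⊤ : Submodule K (TruncAlg K r L)) * ⊤ ≤ ⊤ := le_top

theorem Jrad_le (K : Type*) [Field K] (r L : ℕ) : Jrad K r L ≤ ⊤ * Vgen K r L := by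
  unfold Jrad
  rw [mul_assoc]
  refine (mul_le_mul_right (V_mul_top K r L) _).trans ?_
  rw [← mul_assoc]
  exact mul_le_mul_left le_top _

theorem Vpow_top (K : Type*) [Field K] (r L n : ℕ) :
    Vgen K r L ^ n * ⊤ ≤ ⊤ * Vgen K r L ^ n := by
  induction n with
  | zero => simp
  | succ n ih =>
    rw [pow_succ, mul_assoc]
    refine (mul_le_mul_right (V_mul_top K r L) _).trans ?_
    rw [← mul_assoc, ← mul_assoc]
    exact mul_le_mul_left ih _

theorem Jpow_le (K : Type*) [Field K] (r L n : ℕ) :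
    Jrad K r L ^ n ≤ ⊤ * Vgen K r L ^ n := by
  induction n with
  | zero => simp
  | succ n ih =>
    rw [pow_succ, pow_succ]
    refine (mul_le_mul' ih (Jrad_le K r L)).trans ?_
    rw [mul_assoc, ← mul_assoc (Vgen K r L ^ n)]
    refine (mul_le_mul_right (mul_le_mul_left (Vpow_top K r L n) _) _).trans ?_
    rw [← mul_assoc, ← mul_assoc, ← mul_assoc]
    exact mul_le_mul_left (mul_le_mul_left le_top _) _

theorem Jpow_zero (K : Type*) [Field K] (r L : ℕ) : Jrad K r L ^ (L + 1) = ⊥ := by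
  rw [eq_bot_iff]
  refine (Jpow_le K r L (L + 1)).trans ?_
  have : Vgen K r L ^ (L + 1) = ⊥ := by
    rw [Vgen, Submodule.span_pow, Submodule.span_eq_bot]
    intro x hx
    rw [Set.mem_pow] at hx
    obtain ⟨f, rfl⟩ := hx
    choose g hg using fun i => (f i).2
    have h1 : (RingQuot.mkAlgHom K (TruncRel K r L))
        (List.ofFn fun j => FreeAlgebra.ι K (g j)).prod = 0 := by
      rw [RingQuot.mkAlgHom_rel K (s := TruncRel K r L) ⟨⟨g, rfl⟩, rfl⟩, map_zero]
    rw [map_list_prod, List.map_ofFn] at h1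
    refine Eq.trans ?_ h1
    congr 2
    funext i
    exact (hg i).symm
  rw [this, Submodule.mul_bot]

section mods
variable {K : Type*} [Field K] {r L : ℕ} {M : Type*} [AddCommGroup M]
    [Module (TruncAlg K r L) M]

theorem mem_socle_of_gen (x : M) (hx : ∀ i, gen K r L i • x = 0) :
    x ∈ socle (TruncAlg K r L) M := by
  by_cases h0 : x = 0
  · rw [h0]; exact zero_mem _
  have hs : ∀ a : TruncAlg K r L, ∃ c : K, a • x = algebraMap K (TruncAlg K r L) c • x := by
    intro a
    induction a using trunc_induction with
    | h0 c => exact ⟨c, rfl⟩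
    | h1 i => exact ⟨0, by simp [hx]⟩
    | hm a b iha ihb =>
      obtain ⟨c, hc⟩ := iha
      obtain ⟨d, hd⟩ := ihb
      refine ⟨d * c, ?_⟩
      rw [mul_smul, hd, ← mul_smul, ← Algebra.commutes, mul_smul, hc, ← mul_smul, map_mul]
    | ha a b iha ihb =>
      obtain ⟨c, hc⟩ := iha
      obtain ⟨d, hd⟩ := ihb
      exact ⟨c + d, by rw [add_smul, hc, hd, map_add, add_smul]⟩
  have hmem : Submodule.span (TruncAlg K r L) {x} ∈
      {p : Submodule (TruncAlg K r L) M | IsSimpleModule (TruncAlg K r L) ↥p} := by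
    rw [Set.mem_ofPred_eq, isSimpleModule_iff_isAtom]
    refine ⟨by simpa using h0, fun p hp => ?_⟩
    by_contra hb
    obtain ⟨y, hy, hy0⟩ := Submodule.exists_mem_ne_zero_of_ne_bot hb
    obtain ⟨a, rfl⟩ := Submodule.mem_span_singleton.1 (hp.le hy)
    obtain ⟨c, hc⟩ := hs a
    rw [hc] at hy hy0
    have hc0 : c ≠ 0 := by rintro rfl; simp at hy0
    refine hp.not_ge ?_
    rw [Submodule.span_singleton_le_iff_mem]
    have := p.smul_mem (algebraMap K (TruncAlg K r L) c⁻¹) hy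
    rwa [← mul_smul, ← map_mul, inv_mul_cancel₀ hc0, map_one, one_smul] at this
  exact (le_sSup hmem) (Submodule.mem_span_singleton_self x)

theorem socSeries_le_succ (l : ℕ) : socSeries (TruncAlg K r L) M l ≤
    socSeries (TruncAlg K r L) M (l + 1) := by
  intro x hx
  show (socSeries (TruncAlg K r L) M l).mkQ x ∈
    socle (TruncAlg K r L) (M ⧸ socSeries (TruncAlg K r L) M l)
  have : (socSeries (TruncAlg K r L) M l).mkQ x = 0 := by simpa using hx
  rw [this]; exact zero_mem _

theorem mem_socSeries_succ (l : ℕ) (x : M)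
    (hx : ∀ i, gen K r L i • x ∈ socSeries (TruncAlg K r L) M l) :
    x ∈ socSeries (TruncAlg K r L) M (l + 1) := by
  show (socSeries (TruncAlg K r L) M l).mkQ x ∈
    socle (TruncAlg K r L) (M ⧸ socSeries (TruncAlg K r L) M l)
  apply mem_socle_of_gen
  intro i
  rw [← map_smul]
  exact (Submodule.Quotient.mk_eq_zero _).2 (hx i)

variable [Module K M] [IsScalarTower K (TruncAlg K r L) M]

theorem gen_smul_jpow (l : ℕ) (i : Fin r) (x : M) (hx : x ∈ jpow K r L M l) :
    gen K r L i • x ∈ jpow K r L M (l + 1) := by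
  have hg : gen K r L i ∈ Jrad K r L := by
    have := Submodule.mul_mem_mul (Submodule.mul_mem_mul
      (show (1 : TruncAlg K r L) ∈ (⊤ : Submodule K (TruncAlg K r L)) from trivial)
      (show gen K r L i ∈ Vgen K r L from Submodule.subset_span ⟨i, rfl⟩))
      (show (1 : TruncAlg K r L) ∈ (⊤ : Submodule K (TruncAlg K r L)) from trivial)
    rwa [one_mul, mul_one] at this
  have hJ : ∀ b ∈ Jrad K r L, ∀ c, b * c ∈ Jrad K r L := by
    intro b hb c
    have := Submodule.mul_mem_mul hb
      (show c ∈ (⊤ : Submodule K (TruncAlg K r L)) from trivial)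
    unfold Jrad at this ⊢
    rw [mul_assoc] at this
    have hle : (⊤ : Submodule K (TruncAlg K r L)) * Vgen K r L * (⊤ * ⊤) ≤
      ⊤ * Vgen K r L * ⊤ := mul_le_mul_right le_top _
    exact hle this
  suffices h : ∀ b ∈ Jrad K r L, b • x ∈ jpow K r L M (l + 1) from h _ hg
  unfold jpow at hx
  induction hx using Submodule.span_induction with
  | mem x hx =>
    obtain ⟨a, ha, m, rfl⟩ := hx
    intro b hb
    rw [← mul_smul]
    refine Submodule.subset_span ⟨b * a, ?_, m, rfl⟩
    rw [pow_succ']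
    exact Submodule.mul_mem_mul hb ha
  | zero => intro b _; rw [smul_zero]; exact zero_mem _
  | add x y _ _ hx hy => intro b hb; rw [smul_add]; exact add_mem (hx b hb) (hy b hb)
  | smul c x _ hx => intro b hb; rw [← mul_smul]; exact hx _ (hJ b hb c)

variable (K r L M)
theorem jpow_succ_le (l : ℕ) : jpow K r L M (l + 1) ≤ jpow K r L M l := by
  refine Submodule.span_le.2 ?_
  rintro _ ⟨a, ha, m, rfl⟩
  rw [pow_succ] at ha
  show a • m ∈ jpow K r L M l
  induction ha using Submodule.mul_induction_on' with
  | mem_mul_mem a ha b _ => rw [mul_smul]; exact Submodule.subset_span ⟨a, ha, _, rfl⟩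
  | add x _ y _ hx hy => rw [add_smul]; exact add_mem hx hy

theorem jpow_zero_eq : jpow K r L M 0 = ⊤ := by
  rw [eq_top_iff]
  intro x _
  exact Submodule.subset_span ⟨1, by rw [pow_zero]; exact Submodule.one_le.1 le_rfl, x, (one_smul _ x).symm⟩

theorem jpow_last : jpow K r L M (L + 1) = ⊥ := by
  unfold jpow
  rw [Submodule.span_eq_bot]
  rintro _ ⟨a, ha, m, rfl⟩
  rw [Jpow_zero] at ha
  rw [(Submodule.mem_bot K).1 ha, zero_smul]

theorem jpow_le_soc (k l : ℕ) (h : l + k = L + 1) :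
    jpow K r L M l ≤ socSeries (TruncAlg K r L) M k := by
  induction k generalizing l with
  | zero =>
    have : l = L + 1 := by omega
    rw [this, jpow_last]; exact bot_le
  | succ k ih =>
    intro x hx
    exact mem_socSeries_succ k x fun i => ih (l + 1) (by omega) (gen_smul_jpow l i x hx)

variable [FiniteDimensional K M]

theorem quotDim_add {p q : Submodule K M} (h : p ≤ q) :
    quotDim K M p q + Module.finrank K p = Module.finrank K q := by
  unfold quotDim
  rw [← Submodule.finrank_quotient_add_finrank (Submodule.comap q.subtype p)]
  congr 1
  exact (Submodule.comapSubtypeEquivOfLe h).finrank_eq.symm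

def jd (l : ℕ) : ℕ := Module.finrank K ((jpow K r L M l).restrictScalars K)
def sd (l : ℕ) : ℕ :=
  Module.finrank K ((socSeries (TruncAlg K r L) M l).restrictScalars K)

theorem rad_add (l : Fin (L + 1)) :
    radLayering K r L M l + jd K r L M (l + 1) = jd K r L M l :=
  quotDim_add K M (jpow_succ_le K r L M l)

theorem soc_add (l : Fin (L + 1)) :
    socLayering K r L M l + sd K r L M l = sd K r L M (l + 1) :=
  quotDim_add K M (socSeries_le_succ (K := K) (r := r) (L := L) (M := M) l)

theorem jd_zero : jd K r L M 0 = Module.finrank K M := by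
  unfold jd
  rw [jpow_zero_eq, Submodule.restrictScalars_top, finrank_top]

theorem jd_last : jd K r L M (L + 1) = 0 := by
  unfold jd
  rw [jpow_last, Submodule.restrictScalars_bot, finrank_bot]

theorem sd_zero : sd K r L M 0 = 0 := by
  unfold sd
  rw [socSeries, Submodule.restrictScalars_bot, finrank_bot]

theorem jd_le_sd (k l : ℕ) (h : l + k = L + 1) : jd K r L M l ≤ sd K r L M k :=
  Submodule.finrank_mono (jpow_le_soc K r L M k l h)

end mods

theorem Iic_sum_succ {L : ℕ} (a : Fin (L + 1) → ℕ) (n : ℕ) (hn : n + 1 < L + 1) :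
    ∑ j ∈ Finset.Iic (⟨n + 1, hn⟩ : Fin (L + 1)), a j =
      ∑ j ∈ Finset.Iic (⟨n, by omega⟩ : Fin (L + 1)), a j + a ⟨n + 1, hn⟩ := by
  have : Finset.Iic (⟨n + 1, hn⟩ : Fin (L + 1)) =
      insert ⟨n + 1, hn⟩ (Finset.Iic (⟨n, by omega⟩ : Fin (L + 1))) := by
    ext x
    simp only [Finset.mem_Iic, Finset.mem_insert, Fin.le_def, Fin.ext_iff]
    omega
  rw [this, Finset.sum_insert (by simp [Fin.le_def]), add_comm]

theorem Iic_sum_zero {L : ℕ} (a : Fin (L + 1) → ℕ) (h : 0 < L + 1) :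
    ∑ j ∈ Finset.Iic (⟨0, h⟩ : Fin (L + 1)), a j = a ⟨0, h⟩ := by
  have : Finset.Iic (⟨0, h⟩ : Fin (L + 1)) = {⟨0, h⟩} := by
    ext x
    simp only [Finset.mem_Iic, Finset.mem_singleton, Fin.le_def, Fin.ext_iff]
    omega
  rw [this, Finset.sum_singleton]

/-- telescoping -/
theorem tele {L : ℕ} (a : Fin (L + 1) → ℕ) (s : ℕ → ℕ)
    (h : ∀ l : Fin (L + 1), a l + s l = s (l + 1)) (n : ℕ) (hn : n < L + 1) :
    ∑ j ∈ Finset.Iic (⟨n, hn⟩ : Fin (L + 1)), a j + s 0 = s (n + 1) := by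
  induction n with
  | zero => rw [Iic_sum_zero]; exact h ⟨0, hn⟩
  | succ n ih =>
    rw [Iic_sum_succ]
    have h1 := ih (by omega)
    have h2 := h ⟨n + 1, hn⟩
    simp only at h2
    omega

theorem tele' {L : ℕ} (a : Fin (L + 1) → ℕ) (s : ℕ → ℕ)
    (h : ∀ l : Fin (L + 1), a l + s (l + 1) = s l) (n : ℕ) (hn : n < L + 1) :
    ∑ j ∈ Finset.Iic (⟨n, hn⟩ : Fin (L + 1)), a j + s (n + 1) = s 0 := by
  induction n with
  | zero => rw [Iic_sum_zero]; exact h ⟨0, hn⟩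
  | succ n ih =>
    rw [Iic_sum_succ]
    have h1 := ih (by omega)
    have h2 := h ⟨n + 1, hn⟩
    simp only at h2
    omega

/-- If `socseq M = reverse (rad M)`, then `(rad M, socseq M)` is a minimal
element of `rad-soc(dim_K M)`. -/
theorem stmt5 (K : Type) [Field K] [IsAlgClosed K] (r L : ℕ) (hr : 0 < r) (hL : 0 < L)
    (M : Type) [AddCommGroup M] [Module K M] [Module (TruncAlg K r L) M]
    [IsScalarTower K (TruncAlg K r L) M] [FiniteDimensional K M]
    (h : socLayering K r L M = revTuple L (radLayering K r L M)) :
    ∀ (N : Type) (_ : AddCommGroup N) (_ : Module K N)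
        (_ : Module (TruncAlg K r L) N) (_ : IsScalarTower K (TruncAlg K r L) N)
        (_ : FiniteDimensional K N),
      Module.finrank K N = Module.finrank K M →
      DomLE L (radLayering K r L N) (radLayering K r L M) →
      DomLE L (socLayering K r L N) (socLayering K r L M) →
      radLayering K r L N = radLayering K r L M ∧
        socLayering K r L N = socLayering K r L M := by
  intro N _ _ _ _ _ hd hrad hsoc
  -- in M: sd k = jd (L+1-k)
  have hM : ∀ k l : ℕ, l + k = L + 1 → sd K r L M k = jd K r L M l := by
    intro k
    induction k with
    | zero =>
      intro l hl
      obtain rfl : l = L + 1 := by omega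
      rw [sd_zero, jd_last]
    | succ k ih =>
      intro l hl
      have h1 := ih (l + 1) (by omega)
      have h2 := soc_add K r L M ⟨k, by omega⟩
      have h3 := rad_add K r L M ⟨l, by omega⟩
      have h4 := congrFun h ⟨k, by omega⟩
      have h5 : (⟨k, by omega⟩ : Fin (L + 1)).rev = ⟨l, by omega⟩ := by
        ext; simp only [Fin.val_rev]; omega
      unfold revTuple at h4
      rw [h5] at h4
      simp only at h2 h3
      omega
  have hj : ∀ l, l ≤ L + 1 → jd K r L M l ≤ jd K r L N l := by
    intro l hl
    cases l with
    | zero => rw [jd_zero, jd_zero, hd]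
    | succ n =>
      have h1 := tele' _ _ (rad_add K r L N) n (by omega)
      have h2 := tele' _ _ (rad_add K r L M) n (by omega)
      have h3 := hrad ⟨n, by omega⟩
      rw [jd_zero] at h1 h2
      omega
  have hs : ∀ l, l ≤ L + 1 → sd K r L N l ≤ sd K r L M l := by
    intro l hl
    cases l with
    | zero => rw [sd_zero, sd_zero]
    | succ n =>
      have h1 := tele _ _ (soc_add K r L N) n (by omega)
      have h2 := tele _ _ (soc_add K r L M) n (by omega)
      have h3 := hsoc ⟨n, by omega⟩
      rw [sd_zero] at h1 h2
      omega
  have hje : ∀ l, l ≤ L + 1 → jd K r L N l = jd K r L M l := by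
    intro l hl
    have h1 := hj l hl
    have h2 := hs (L + 1 - l) (by omega)
    have h3 := hM (L + 1 - l) l (by omega)
    have h4 := jd_le_sd K r L N (L + 1 - l) l (by omega)
    omega
  have hse : ∀ l, l ≤ L + 1 → sd K r L N l = sd K r L M l := by
    intro l hl
    have h1 := hj (L + 1 - l) (by omega)
    have h2 := hs l (by omega)
    have h3 := hM l (L + 1 - l) (by omega)
    have h4 := jd_le_sd K r L N l (L + 1 - l) (by omega)
    omega
  constructor
  · funext l
    have h1 := rad_add K r L N l
    have h2 := rad_add K r L M l
    have h3 := hje l (by omega)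
    have h4 := hje (l + 1) (by omega)
    omega
  · funext l
    have h1 := soc_add K r L N l
    have h2 := soc_add K r L M l
    have h3 := hse l (by omega)
    have h4 := hse (l + 1) (by omega)
    omega
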